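/- Let G be a graph of odd order p and size e with χ(G) = χ_la(G). Suppose there exists a local antimagic labeling f of G with c(f) = χ(G). Let m ≥ 3 be an odd integer. If for every vertex u of G, f⁺(u) is not equal to any of (p−m)(2e+pm+1)/2 + 2(e+pm) + m, (p−m)(2e+pm+1)/2 + 2(e+pm) + m + 1, and (p−m)(2e+pm+1)/2 + 2(e+pm) + (3m+1)/2, then χ_la(G ∨ C_m) = χ_la(G) + 3. -/

import Mathlib

open Finset SimpleGraph
open scoped Classical

/-- The induced vertex label (weight) of `x`: the sum of `f` over all edges incident to `x`. -/
noncomputable def vertexWeight {V : Type*} [Fintype V] (G : SimpleGraph V)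
    (f : Sym2 V → ℕ) (x : V) : ℕ :=
  ∑ e ∈ G.edgeFinset.filter (fun e => x ∈ e), f e

/-- `f` is a local antimagic labeling of `G`: it restricts to a bijection from the edge set of
`G` onto `{1, …, q}` (where `q` is the number of edges), and adjacent vertices get distinct
induced vertex labels. -/
def IsLocalAntimagic {V : Type*} [Fintype V] (G : SimpleGraph V) (f : Sym2 V → ℕ) : Prop :=
  Set.BijOn f G.edgeSet (Set.Icc 1 G.edgeSet.ncard) ∧
  ∀ ⦃x y : V⦄, G.Adj x y → vertexWeight G f x ≠ vertexWeight G f y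

/-- The number of distinct induced vertex labels, `c(f)`. -/
noncomputable def colorCount {V : Type*} [Fintype V] (G : SimpleGraph V)
    (f : Sym2 V → ℕ) : ℕ :=
  (Finset.univ.image (vertexWeight G f)).card

/-- The local antimagic chromatic number `χ_la(G)`. -/
noncomputable def chiLA {V : Type*} [Fintype V] (G : SimpleGraph V) : ℕ :=
  sInf { n | ∃ f : Sym2 V → ℕ, IsLocalAntimagic G f ∧ colorCount G f = n }

/-- The join `G ∨ H` of two vertex-disjoint graphs. -/
def joinG {α β : Type*} (G : SimpleGraph α) (H : SimpleGraph β) : SimpleGraph (α ⊕ β) :=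
  SimpleGraph.fromRel (fun x y =>
    (∃ a b, x = Sum.inl a ∧ y = Sum.inl b ∧ G.Adj a b) ∨
    (∃ a b, x = Sum.inr a ∧ y = Sum.inr b ∧ H.Adj a b) ∨
    (∃ a b, x = Sum.inl a ∧ y = Sum.inr b))

/-!
The join edges carry the `p * m` labels following those of `G`, arranged as a `p × m` magic
rectangle: every vertex of `G` gains the same amount, so no two colours of `G` merge and no new ones
appear, and every vertex of `C_m` receives the same contribution. The largest `m` labels zigzag
around `C_m`, so that the two rim labels at a vertex add up to one of only three values; these
produce the three forbidden weights. For `p = 1` no magic rectangle exists and an explicit labelling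
of the wheel is used. The lower bound is `χ(G ∨ C_m) = χ(G) + 3`.

A magic rectangle with odd sides `2 * h + 1 ≤ 2 * k + 1` is built, with entries centred at zero,
from the row `l ↦ l` for `-k ≤ l ≤ k` and `h` pairs of rows, the `N`-th pair carrying the values
within `k` of `± N * (2 * k + 1)`. The signs in the pairs are chosen such that all columns sum to
zero and every row sum is cured by exchanging one entry with the row `0`, in a column of its own.
-/

section MagicRectangle

variable {α β : Type*}

/-- A centred magic rectangle with rows `s` and columns `t`: the integers of absolute value less
than `#s * #t / 2` all occur as entries, and all row and column sums vanish. For `#s * #t` odd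
there are `#s * #t` such integers, so each of them occurs exactly once. -/
structure IsMagicRectangle (s : Finset α) (t : Finset β) (M : α → β → ℤ) : Prop where
  exists_eq : ∀ v : ℤ, 2 * |v| < #s * #t → ∃ i ∈ s, ∃ j ∈ t, M i j = v
  sum_row : ∀ i ∈ s, ∑ j ∈ t, M i j = 0
  sum_col : ∀ j ∈ t, ∑ i ∈ s, M i j = 0

namespace IsMagicRectangle

variable {s : Finset α} {t : Finset β} {M : α → β → ℤ}

lemma transpose (hM : IsMagicRectangle s t M) : IsMagicRectangle t s fun j i => M i j where
  exists_eq v hv := by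
    obtain ⟨i, hi, j, hj, hij⟩ := hM.exists_eq v (by rwa [mul_comm (#s : ℤ)])
    exact ⟨j, hj, i, hi, hij⟩
  sum_row := hM.sum_col
  sum_col := hM.sum_row

lemma reindex {α' β' : Type*} [Fintype α'] [Fintype β'] (hM : IsMagicRectangle s t M)
    (hs : Fintype.card α' = #s) (ht : Fintype.card β' = #t) :
    ∃ M' : α' → β' → ℤ, IsMagicRectangle univ univ M' := by
  let φ : α' ≃ s := Fintype.equivOfCardEq (by rw [hs, Fintype.card_coe])
  let ψ : β' ≃ t := Fintype.equivOfCardEq (by rw [ht, Fintype.card_coe])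
  refine ⟨fun a b => M (φ a) (ψ b), fun v hv => ?_, fun a _ => ?_, fun b _ => ?_⟩
  · rw [card_univ, card_univ, hs, ht] at hv
    obtain ⟨i, hi, j, hj, hij⟩ := hM.exists_eq v hv
    exact ⟨φ.symm ⟨i, hi⟩, mem_univ _, ψ.symm ⟨j, hj⟩, mem_univ _, by simpa using hij⟩
  · rw [ψ.sum_comp fun j => M (φ a) j, sum_coe_sort t (M (φ a))]
    exact hM.sum_row _ (φ a).2
  · rw [φ.sum_comp fun i => M i (ψ b), sum_coe_sort s fun i => M i (ψ b)]
    exact hM.sum_col _ (ψ b).2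

lemma two_mul_abs_lt (hM : IsMagicRectangle s t M) (hodd : Odd (#s * #t)) {i : α} {j : β}
    (hi : i ∈ s) (hj : j ∈ t) : 2 * |M i j| < #s * #t := by
  obtain ⟨N, hN⟩ := hodd
  have hN' : (#s * #t : ℤ) = 2 * N + 1 := by exact_mod_cast hN
  have hsub : Icc (-(N : ℤ)) N ⊆ (s ×ˢ t).image fun x => M x.1 x.2 := by
    intro v hv
    have hvN : |v| ≤ N := abs_le.mpr (mem_Icc.mp hv)
    obtain ⟨i, hi, j, hj, hij⟩ := hM.exists_eq v (by rw [hN']; omega)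
    exact mem_image.mpr ⟨(i, j), mem_product.mpr ⟨hi, hj⟩, hij⟩
  have hcard : #((s ×ˢ t).image fun x => M x.1 x.2) ≤ #(Icc (-(N : ℤ)) N) := by
    refine card_image_le.trans ?_
    rw [card_product, hN, Int.card_Icc]
    omega
  have hmem : M i j ∈ Icc (-(N : ℤ)) N := by
    rw [eq_of_subset_of_card_le hsub hcard]
    exact mem_image_of_mem (fun x : α × β => M x.1 x.2)
      (mem_product.mpr ⟨hi, hj⟩ : (i, j) ∈ s ×ˢ t)
  have := abs_le.mpr (mem_Icc.mp hmem)
  rw [hN']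
  omega

/-- If every column already sums to zero, the row sums can be repaired by exchanging, in each
column `j`, the entries in rows `r` and `σ j`: row `i` loses the entries it passes on to `r`. -/
lemma of_swap [DecidableEq α] {r : α} (hr : r ∈ s) (σ : β → α) (hσ : ∀ j ∈ t, σ j ∈ s)
    (hsurj : ∀ v : ℤ, 2 * |v| < #s * #t → ∃ i ∈ s, ∃ j ∈ t, M i j = v)
    (hcol : ∀ j ∈ t, ∑ i ∈ s, M i j = 0)
    (hrow : ∀ i ∈ s, i ≠ r → ∑ j ∈ t, M i j = ∑ j ∈ t with σ j = i, (M i j - M r j)) :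
    IsMagicRectangle s t fun i j => M (Equiv.swap r (σ j) i) j := by
  have hswap : ∀ j ∈ t, ∀ i ∈ s, Equiv.swap r (σ j) i ∈ s := fun j hj i hi => by
    rw [Equiv.swap_apply_def]
    split_ifs
    exacts [hσ j hj, hr, hi]
  have hcol' : ∀ j ∈ t, ∑ i ∈ s, M (Equiv.swap r (σ j) i) j = 0 := fun j hj => by
    rw [← hcol j hj]
    exact sum_equiv (Equiv.swap r (σ j))
      (fun i => ⟨hswap j hj i, fun h => by simpa using hswap j hj _ h⟩) fun _ _ => rfl
  have hrow' : ∀ i ∈ s, i ≠ r → ∑ j ∈ t, M (Equiv.swap r (σ j) i) j = 0 := fun i hi hir => by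
    have hentry : ∀ j, M (Equiv.swap r (σ j) i) j
        = M i j - if σ j = i then M i j - M r j else 0 := fun j => by
      rw [Equiv.swap_apply_def, if_neg hir]
      by_cases h : σ j = i
      · rw [if_pos h.symm, if_pos h, sub_sub_cancel]
      · rw [if_neg (Ne.symm h), if_neg h, sub_zero]
    simp only [hentry, sum_sub_distrib, ← sum_filter, hrow i hi hir, sub_self]
  refine ⟨fun v hv => ?_, fun i hi => ?_, hcol'⟩
  · obtain ⟨i, hi, j, hj, hij⟩ := hsurj v hv
    exact ⟨Equiv.swap r (σ j) i, hswap j hj i hi, j, hj, by rwa [Equiv.swap_apply_self]⟩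
  · by_cases hir : i = r
    · have htotal := sum_comm.trans (sum_eq_zero hcol')
      rwa [sum_eq_single_of_mem i hi fun i' hi' hne => hrow' i' hi' (hir ▸ hne)] at htotal
    · exact hrow' i hi hir

end IsMagicRectangle

lemma sum_Icc_neg_natCast {A : Type*} [AddCommMonoid A] (k : ℕ) (F : ℤ → A) :
    ∑ l ∈ Icc (-(k : ℤ)) k, F l = F 0 + ∑ i ∈ Icc 1 k, (F i + F (-i)) := by
  induction k with
  | zero => simp
  | succ k ih =>
    have hIcc : Icc (-((k + 1 : ℕ) : ℤ)) ((k + 1 : ℕ) : ℤ)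
        = insert ((k + 1 : ℕ) : ℤ) (insert (-((k + 1 : ℕ) : ℤ)) (Icc (-(k : ℤ)) k)) := by
      ext x
      simp only [mem_Icc, mem_insert]
      omega
    rw [hIcc, sum_insert (by simp only [mem_insert, mem_Icc]; omega),
      sum_insert (by simp only [mem_Icc]; omega), ih, sum_Icc_succ_top (by omega)]
    abel

/-- The rows `N` and `-N` prescribed for a rectangle with columns `[-k, k]`, whose row `0` is
`l ↦ l`: they contain the integers whose absolute value is within `k` of `N * (2 * k + 1)`, and
row `N` (resp. `-N`) gets sum zero once its entry in column `N - 1` (resp. `-N`) is exchanged with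
the one in row `0`. -/
structure IsRowPair (k N : ℕ) (x y : ℤ → ℤ) : Prop where
  exists_eq : ∀ v : ℤ, |(|v| - N * (2 * k + 1))| ≤ k →
    ∃ l ∈ Icc (-(k : ℤ)) k, x l = v ∨ y l = v
  sum_left : ∑ l ∈ Icc (-(k : ℤ)) k, x l = x (N - 1) - (N - 1)
  sum_right : ∑ l ∈ Icc (-(k : ℤ)) k, y l = y (-N) + N

/-- The rectangle with row `0` equal to `l ↦ l` and rows `N` and `-N` equal to `x N` and `y N`. -/
def stackRows (x y : ℕ → ℤ → ℤ) (i l : ℤ) : ℤ :=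
  if i = 0 then l else if 0 < i then x i.natAbs l else y i.natAbs l

lemma stackRows_zero (x y : ℕ → ℤ → ℤ) (l : ℤ) : stackRows x y 0 l = l :=
  if_pos rfl

lemma stackRows_natCast (x y : ℕ → ℤ → ℤ) {N : ℕ} (hN : 1 ≤ N) (l : ℤ) :
    stackRows x y N l = x N l := by
  rw [stackRows, if_neg (by omega), if_pos (by omega), Int.natAbs_natCast]

lemma stackRows_neg_natCast (x y : ℕ → ℤ → ℤ) {N : ℕ} (hN : 1 ≤ N) (l : ℤ) :
    stackRows x y (-N) l = y N l := by
  rw [stackRows, if_neg (by omega), if_neg (by omega), Int.natAbs_neg, Int.natAbs_natCast]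

lemma exists_stackRows_eq {h k : ℕ} {x y : ℕ → ℤ → ℤ}
    (hxy : ∀ N, 1 ≤ N → N ≤ h → IsRowPair k N (x N) (y N)) {v : ℤ}
    (hv : 2 * |v| < (2 * h + 1) * (2 * k + 1)) :
    ∃ i ∈ Icc (-(h : ℤ)) h, ∃ l ∈ Icc (-(k : ℤ)) k, stackRows x y i l = v := by
  obtain ⟨N, hN⟩ : ∃ N : ℕ, (N : ℤ) = (|v| + k) / (2 * k + 1) :=
    ⟨_, Int.toNat_of_nonneg (by positivity)⟩
  have hlow : N * (2 * k + 1) ≤ |v| + k := hN ▸ Int.ediv_mul_le _ (by omega)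
  have hupp : |v| + k < (N + 1) * (2 * k + 1) := hN ▸ Int.lt_ediv_add_one_mul_self _ (by omega)
  have hNh : N ≤ h := by
    have : (N : ℤ) < h + 1 := by
      rw [hN]
      exact Int.ediv_lt_of_lt_mul (by omega) (by linarith)
    omega
  obtain rfl | hN1 := N.eq_zero_or_pos
  · have := abs_le.mp (show |v| ≤ k by push_cast at hupp; linarith)
    exact ⟨0, by simp, v, mem_Icc.mpr this, stackRows_zero x y v⟩
  · obtain ⟨l, hl, hlv | hlv⟩ := (hxy N hN1 hNh).exists_eq v
      (abs_le.mpr ⟨by linarith, by linarith⟩)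
    · exact ⟨N, by rw [mem_Icc]; omega, l, hl, (stackRows_natCast x y hN1 l).trans hlv⟩
    · exact ⟨-N, by rw [mem_Icc]; omega, l, hl, (stackRows_neg_natCast x y hN1 l).trans hlv⟩

lemma exists_isMagicRectangle_of_isRowPair {h k : ℕ} (hhk : h ≤ k) {x y : ℕ → ℤ → ℤ}
    (hxy : ∀ N, 1 ≤ N → N ≤ h → IsRowPair k N (x N) (y N))
    (hcol : ∀ l, ∑ N ∈ Icc 1 h, (x N l + y N l) = -l) :
    ∃ M, IsMagicRectangle (Icc (-(h : ℤ)) h) (Icc (-(k : ℤ)) k) M := by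
  let τ : ℤ → ℤ := fun l => if 0 ≤ l then l + 1 else l
  let σ : ℤ → ℤ := fun l => if |τ l| ≤ h then τ l else 0
  have hσ : ∀ i l, i ≠ 0 → (σ l = i ↔ |i| ≤ h ∧ l = if 0 < i then i - 1 else i) := by
    intro i l hi
    simp only [σ, τ, abs_le]
    split_ifs <;> omega
  have hfilter : ∀ i ∈ Icc (-(h : ℤ)) h, i ≠ 0 →
      {l ∈ Icc (-(k : ℤ)) k | σ l = i} = {if 0 < i then i - 1 else i} := by
    intro i hi hi0
    ext l
    rw [mem_Icc] at hi
    rw [mem_filter, mem_singleton, hσ i l hi0, mem_Icc, abs_le]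
    split_ifs <;> omega
  refine ⟨_, IsMagicRectangle.of_swap (r := 0) (M := stackRows x y) (by simp) σ (fun l _ => ?_)
    (fun v hv => exists_stackRows_eq hxy ?_) (fun l _ => ?_) fun i hi hi0 => ?_⟩
  · simp only [σ, mem_Icc]
    split_ifs with hl
    · exact abs_le.mp hl
    · omega
  · convert hv using 2 <;> rw [Int.card_Icc] <;> omega
  · rw [sum_Icc_neg_natCast, stackRows_zero, add_eq_zero_iff_eq_neg', ← hcol]
    refine sum_congr rfl fun N hN => ?_
    have hN1 := (mem_Icc.mp hN).1
    rw [stackRows_natCast x y hN1, stackRows_neg_natCast x y hN1]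
  · rw [hfilter i hi hi0, sum_singleton, stackRows_zero]
    rw [mem_Icc] at hi
    obtain ⟨N, rfl | rfl⟩ := i.eq_nat_or_neg
    · have hN1 : 1 ≤ N := by omega
      simp only [stackRows_natCast x y hN1, (hxy N hN1 (by omega)).sum_left]
      rw [if_pos (by omega)]
    · have hN1 : 1 ≤ N := by omega
      simp only [stackRows_neg_natCast x y hN1, (hxy N hN1 (by omega)).sum_right]
      rw [if_neg (by omega), sub_neg_eq_add]

lemma exists_even_sign {k : ℕ} {A : Finset ℕ} (hA : A ⊆ Icc 1 k) (hcard : #A + k / 2 ≤ k) :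
    ∃ ε : ℤ → ℤ, (∀ l, ε l = 1 ∨ ε l = -1) ∧ (∀ l, ε (-l) = ε l) ∧ (∀ i ∈ A, ε i = 1) ∧
      ∑ l ∈ Icc (-(k : ℤ)) k, ε l = 1 := by
  obtain ⟨Q, hQ, hQcard⟩ : ∃ Q ⊆ Icc 1 k \ A, #Q = k / 2 :=
    exists_subset_card_eq (by rw [card_sdiff_of_subset hA, Nat.card_Icc]; omega)
  have hQIcc : Q ⊆ Icc 1 k := hQ.trans sdiff_subset
  let ε : ℤ → ℤ := fun l =>
    if l = 0 then if Even k then 1 else -1 else if l.natAbs ∈ Q then -1 else 1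
  have hpos : ∀ i ∈ Icc 1 k, ε i + ε (-i) = 2 - if i ∈ Q then 4 else 0 := fun i hi => by
    have hi0 : i ≠ 0 := by have := mem_Icc.mp hi; omega
    simp only [ε, Int.natCast_eq_zero, neg_eq_zero, hi0, if_false, Int.natAbs_neg,
      Int.natAbs_natCast]
    split_ifs <;> rfl
  refine ⟨ε, fun l => ?_, fun l => ?_, fun i hi => ?_, ?_⟩
  · simp only [ε]
    split_ifs <;> simp
  · simp only [ε, neg_eq_zero, Int.natAbs_neg]
  · have hi0 : i ≠ 0 := by have := mem_Icc.mp (hA hi); omega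
    simp only [ε, Int.natCast_eq_zero, hi0, if_false, Int.natAbs_natCast]
    exact if_neg fun h => (mem_sdiff.mp (hQ h)).2 hi
  · rw [sum_Icc_neg_natCast, sum_congr rfl hpos, sum_sub_distrib, ← sum_filter,
      filter_mem_eq_inter, inter_eq_right.mpr hQIcc, sum_const, sum_const, Nat.card_Icc, hQcard]
    simp only [ε, if_true, nsmul_eq_mul, Nat.even_iff]
    split_ifs <;> push_cast <;> omega

lemma exists_isRowPair {k N : ℕ} (hk : 3 ≤ k) (hN : 2 ≤ N) (hNk : N ≤ k) :
    ∃ x y, IsRowPair k N x y ∧ ∀ l, x l + y l = 0 := by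
  obtain ⟨ε, hε, hεneg, hεA, hεsum⟩ := exists_even_sign (k := k) (A := {N - 1, N})
    (by simp only [insert_subset_iff, singleton_subset_iff, mem_Icc]; omega)
    (by have := card_le_two (a := N - 1) (b := N); omega)
  have hε1 : ε (N - 1) = 1 := by
    have := hεA (N - 1) (by simp)
    rwa [Nat.cast_sub (by omega)] at this
  have hεN : ε N = 1 := hεA N (by simp)
  let c : ℤ := N * (2 * k + 1)
  -- As `ε` is even and `z` is odd, both rows sum to `± c`; flipping `± N` makes column `-N` fit.
  let z : ℤ → ℤ := fun l => if |l| = N then -l else l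
  have hz : ∀ d, z (z d) = d := fun d => by
    simp only [z]
    split_ifs <;> simp_all
  have hsum : ∑ l ∈ Icc (-(k : ℤ)) k, ε l * (c + z l) = c := by
    have hodd : ∑ l ∈ Icc (-(k : ℤ)) k, ε l * z l = 0 := by
      rw [sum_Icc_neg_natCast, sum_eq_zero fun i _ => ?_, add_zero]
      · simp [z]
      · simp only [z, hεneg, abs_neg]
        split_ifs <;> ring
    simp only [mul_add, sum_add_distrib, ← sum_mul, hεsum, hodd, one_mul, add_zero]
  refine ⟨fun l => ε l * (c + z l), fun l => -(ε l * (c + z l)), ⟨fun v hv => ?_, ?_, ?_⟩,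
    fun l => add_neg_cancel _⟩
  · have hd : c + z (z (|v| - c)) = |v| := by rw [hz, add_sub_cancel]
    refine ⟨z (|v| - c), ?_, ?_⟩
    · rw [mem_Icc, ← abs_le]
      simp only [z]
      split_ifs
      · rwa [abs_neg]
      · exact hv
    · rw [hd]
      obtain h | h := hε (z (|v| - c)) <;> rw [h] <;> grind
  · have : z (N - 1) = N - 1 := if_neg (by rw [abs_of_nonneg] <;> omega)
    simp only [hsum, this, hε1]
    ring
  · have : z (-N) = N := by simp [z]
    simp only [sum_neg_distrib, hsum, this, hεneg, hεN]
    ring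

/-- The positive entry of column `l` in the rows `1` and `-1`; the negative one is
`-l - topEntry k l`. -/
def topEntry (k : ℕ) (l : ℤ) : ℤ :=
  if l ≤ 0 then k + 1 - 2 * l else 3 * k + 2 - 2 * l

lemma exists_topEntry_eq {k : ℕ} {v : ℤ} (hv : |(|v| - (2 * k + 1))| ≤ k) :
    ∃ l ∈ Icc (-(k : ℤ)) k, topEntry k l = v ∨ -l - topEntry k l = v := by
  have habs : (k + 1 : ℤ) ≤ |v| ∧ |v| ≤ 3 * k + 1 := by
    have := abs_le.mp hv
    omega
  simp only [topEntry, mem_Icc]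
  obtain hneg | hpos := lt_or_ge v 0
  · rw [abs_of_neg hneg] at habs
    obtain hlt | hge := lt_or_ge v (-(2 * k + 1))
    · exact ⟨v + 3 * k + 2, by omega, Or.inr (by split_ifs <;> omega)⟩
    · exact ⟨v + k + 1, by omega, Or.inr (by split_ifs <;> omega)⟩
  · rw [abs_of_nonneg hpos] at habs
    obtain ⟨j, hj | hj⟩ := (v - k - 1).even_or_odd'
    · exact ⟨-j, by omega, Or.inl (by split_ifs <;> omega)⟩
    · exact ⟨k - j, by omega, Or.inl (by split_ifs <;> omega)⟩

/-- In the columns `0`, `±i` for `i ∈ Y`, and `-i` for `i ∈ X`, the row `x` takes the positive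
entry. -/
lemma exists_isRowPair_one_of_sum_eq_zero {k : ℕ} {X Y : Finset ℕ} (hX : X ⊆ Icc 1 k)
    (hY : Y ⊆ Icc 1 k) (hXY : Disjoint X Y) (h1 : 1 ∈ X ∪ Y)
    (hsum : ∑ i ∈ X, (3 * i - 2 * k - 1 : ℤ) + (2 * #Y + #X - k) * (4 * k + 3) = 0) :
    ∃ x y, IsRowPair k 1 x y ∧ ∀ l, x l + y l = -l := by
  let S : ℤ → Prop := fun l => l = 0 ∨ l.natAbs ∈ Y ∨ l < 0 ∧ l.natAbs ∈ X
  let x : ℤ → ℤ := fun l => if S l then topEntry k l else -l - topEntry k l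
  have hx0 : x 0 = k + 1 := by simp [x, S, topEntry]
  have hx1 : x (-1) = k + 3 := by
    have : S (-1) := Or.inr ((mem_union.mp h1).symm.imp id fun h => ⟨by norm_num, h⟩)
    simp only [x, if_pos this, topEntry]
    split_ifs <;> omega
  have hpair : ∀ i ∈ Icc 1 k, x i + x (-i) =
      -(4 * k + 3) + (if i ∈ Y then 2 * (4 * k + 3 : ℤ) else 0) +
        if i ∈ X then (3 * i - 2 * k - 1) + (4 * k + 3 : ℤ) else 0 := fun i hi => by
    have hi1 := (mem_Icc.mp hi).1
    have hdisj : i ∈ Y → i ∉ X := fun hiY hiX => disjoint_left.mp hXY hiX hiY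
    simp only [x, S, topEntry, Int.natAbs_natCast, Int.natAbs_neg]
    grind
  have hsumx : ∑ l ∈ Icc (-(k : ℤ)) k, x l = k + 1 := by
    rw [sum_Icc_neg_natCast, hx0, sum_congr rfl hpair]
    simp only [sum_add_distrib, ← sum_filter, filter_mem_eq_inter, inter_eq_right.mpr hX,
      inter_eq_right.mpr hY, sum_const, Nat.card_Icc, nsmul_eq_mul, Nat.add_sub_cancel]
    linarith
  refine ⟨x, fun l => -l - x l, ⟨fun v hv => ?_, ?_, ?_⟩, fun l => by ring⟩
  · obtain ⟨l, hl, hlv⟩ := exists_topEntry_eq (by simpa using hv)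
    refine ⟨l, hl, ?_⟩
    by_cases hS : S l
    · simpa only [x, if_pos hS] using hlv
    · simpa only [x, if_neg hS, sub_sub_cancel] using hlv.symm
  · norm_num [hsumx, hx0]
  · have : ∑ l ∈ Icc (-(k : ℤ)) k, -l = 0 := by simp [sum_Icc_neg_natCast]
    simp only [sum_sub_distrib, this, hsumx, Nat.cast_one, hx1]
    ring

-- For `k = 3` no admissible `X` and `Y` exist.
lemma exists_isRowPair_one_three : ∃ x y, IsRowPair 3 1 x y ∧ ∀ l, x l + y l = -l := by
  let x : ℤ → ℤ := fun l => [-6, 6, 10, 8, -5, 5, -10].getD (l + 3).toNat 0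
  have hsurj : ∀ v ∈ Icc (-10 : ℤ) 10, |(|v| - 7)| ≤ 3 →
      ∃ l ∈ Icc (-3 : ℤ) 3, x l = v ∨ -l - x l = v := by decide
  refine ⟨x, fun l => -l - x l, ⟨fun v hv => ?_, by decide, by decide⟩, fun l => by ring⟩
  have hv7 : |(|v| - 7)| ≤ 3 := by simpa using hv
  exact hsurj v (by grind) hv7

lemma exists_isRowPair_one {k : ℕ} (hk : 1 ≤ k) :
    ∃ x y, IsRowPair k 1 x y ∧ ∀ l, x l + y l = -l := by
  obtain ⟨j, rfl | rfl⟩ := k.even_or_odd'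
  · refine exists_isRowPair_one_of_sum_eq_zero (X := ∅) (Y := Icc 1 j) (empty_subset _)
      (Icc_subset_Icc_right (by omega)) (disjoint_empty_left _) (by simp; omega) ?_
    simp
  · obtain rfl | rfl | hj : j = 0 ∨ j = 1 ∨ 2 ≤ j := by omega
    · exact exists_isRowPair_one_of_sum_eq_zero (X := {1}) (Y := ∅) (by simp) (by simp) (by simp)
        (by simp) (by simp)
    · exact exists_isRowPair_one_three
    · have hmem : 2 ∈ Icc 1 j := by rw [mem_Icc]; omega
      refine exists_isRowPair_one_of_sum_eq_zero (X := {2, 2 * j, 2 * j + 1})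
        (Y := (Icc 1 j).erase 2) ?_ ?_ ?_ ?_ ?_
      · simp only [insert_subset_iff, singleton_subset_iff, mem_Icc]
        omega
      · exact (erase_subset _ _).trans (Icc_subset_Icc_right (by omega))
      · simp only [disjoint_insert_left, disjoint_singleton_left, mem_erase, mem_Icc]
        omega
      · simp only [mem_union, mem_erase, mem_Icc]
        omega
      · rw [card_erase_of_mem hmem, Nat.card_Icc, sum_insert, sum_insert, sum_singleton,
          card_insert_of_notMem, card_insert_of_notMem, card_singleton, Nat.add_sub_cancel,
          Nat.cast_sub (by omega)]
        · push_cast; ring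
        all_goals simp only [mem_insert, mem_singleton]; omega

lemma exists_isMagicRectangle_Icc {h k : ℕ} (hh : 1 ≤ h) (hhk : h ≤ k) (hk : h = 1 ∨ 3 ≤ k) :
    ∃ M, IsMagicRectangle (Icc (-(h : ℤ)) h) (Icc (-(k : ℤ)) k) M := by
  have hrows : ∀ N, ∃ x y, 1 ≤ N → N ≤ h →
      IsRowPair k N x y ∧ ∀ l, x l + y l = if N = 1 then -l else 0 := fun N => by
    by_cases hN : 2 ≤ N ∧ N ≤ h
    · obtain ⟨x, y, hxy, hcol⟩ := exists_isRowPair (k := k) (by omega) hN.1 (hN.2.trans hhk)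
      exact ⟨x, y, fun _ _ => ⟨hxy, fun l => by rw [hcol, if_neg (by omega)]⟩⟩
    · obtain ⟨x, y, hxy, hcol⟩ := exists_isRowPair_one (hh.trans hhk)
      refine ⟨x, y, fun hN1 hNh => ?_⟩
      obtain rfl : N = 1 := by omega
      exact ⟨hxy, fun l => by rw [hcol, if_pos rfl]⟩
  choose x y hxy using hrows
  refine exists_isMagicRectangle_of_isRowPair hhk (fun N hN1 hNh => (hxy N hN1 hNh).1) fun l => ?_
  rw [sum_congr rfl fun N hN => (hxy N (mem_Icc.mp hN).1 (mem_Icc.mp hN).2).2 l, sum_ite_eq',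
    if_pos (mem_Icc.mpr ⟨le_rfl, hh⟩)]

-- The two summands come from orthogonal Latin squares, so their pairs of values are all distinct.
lemma exists_isMagicRectangle_five :
    ∃ M : Fin 5 → Fin 5 → ℤ, IsMagicRectangle univ univ M := by
  refine ⟨fun i j => 5 * (((i + j : Fin 5) : ℤ) - 2) + (((i + 2 * j : Fin 5) : ℤ) - 2),
    fun v hv => ?_, by decide, by decide⟩
  have hsurj : ∀ v ∈ Icc (-12 : ℤ) 12, ∃ i ∈ univ, ∃ j ∈ univ,
      5 * (((i + j : Fin 5) : ℤ) - 2) + (((i + 2 * j : Fin 5) : ℤ) - 2) = v := by decide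
  have hv' : 2 * |v| < 25 := hv
  exact hsurj v (by grind)

variable [Fintype α] [Fintype β]

lemma exists_isMagicRectangle_of_card_le (hα : Odd (Fintype.card α)) (hβ : Odd (Fintype.card β))
    (hα1 : 1 < Fintype.card α) (hαβ : Fintype.card α ≤ Fintype.card β) :
    ∃ M : α → β → ℤ, IsMagicRectangle univ univ M := by
  obtain ⟨h, hh⟩ := hα
  obtain ⟨k, hk⟩ := hβ
  by_cases hhk : h = 1 ∨ 3 ≤ k
  · obtain ⟨M, hM⟩ := exists_isMagicRectangle_Icc (k := k) (by omega) (by omega) hhk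
    exact hM.reindex (by rw [hh, Int.card_Icc]; omega) (by rw [hk, Int.card_Icc]; omega)
  · obtain ⟨M, hM⟩ := exists_isMagicRectangle_five
    exact hM.reindex (by rw [card_univ, Fintype.card_fin]; omega)
      (by rw [card_univ, Fintype.card_fin]; omega)

lemma exists_isMagicRectangle (hα : Odd (Fintype.card α)) (hβ : Odd (Fintype.card β))
    (hα1 : 1 < Fintype.card α) (hβ1 : 1 < Fintype.card β) :
    ∃ M : α → β → ℤ, IsMagicRectangle univ univ M := by
  obtain hle | hle := le_total (Fintype.card α) (Fintype.card β)
  · exact exists_isMagicRectangle_of_card_le hα hβ hα1 hle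
  · obtain ⟨M, hM⟩ := exists_isMagicRectangle_of_card_le hβ hα hβ1 hle
    exact ⟨_, hM.transpose⟩

lemma exists_magic_labels (hα : Odd (Fintype.card α)) (hβ : Odd (Fintype.card β))
    (hα1 : 1 < Fintype.card α) (hβ1 : 1 < Fintype.card β) (e : ℕ) :
    ∃ W : α → β → ℕ,
      (∀ v, e < v → v ≤ e + Fintype.card α * Fintype.card β → ∃ a b, W a b = v) ∧
      (∀ a, 2 * ∑ b, W a b =
        Fintype.card β * (2 * e + Fintype.card α * Fintype.card β + 1)) ∧
      ∀ b, 2 * ∑ a, W a b =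
        Fintype.card α * (2 * e + Fintype.card α * Fintype.card β + 1) := by
  obtain ⟨M, hM⟩ := exists_isMagicRectangle hα hβ hα1 hβ1
  obtain ⟨N, hN⟩ := hα.mul hβ
  have hN' : (Fintype.card α * Fintype.card β : ℤ) = 2 * N + 1 := by exact_mod_cast hN
  have hW : ∀ a b, ((e + N + 1 + M a b).toNat : ℤ) = e + N + 1 + M a b := fun a b => by
    have hlt := hM.two_mul_abs_lt (hα.mul hβ) (mem_univ a) (mem_univ b)
    rw [card_univ, card_univ, hN'] at hlt
    exact Int.toNat_of_nonneg (by grind)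
  refine ⟨fun a b => (e + N + 1 + M a b).toNat, fun v hev hv => ?_, fun a => ?_, fun b => ?_⟩
  · obtain ⟨a, -, b, -, hab⟩ := hM.exists_eq (v - e - N - 1) (by
      rw [card_univ, card_univ, hN']; grind)
    exact ⟨a, b, Int.natCast_inj.mp ((hW a b).trans (by rw [hab]; ring))⟩
  · zify
    simp only [hW, sum_add_distrib, hM.sum_row a (mem_univ a), hN', sum_const, card_univ,
      nsmul_eq_mul]
    ring
  · zify
    simp only [hW, sum_add_distrib, hM.sum_col b (mem_univ b), hN', sum_const, card_univ,
      nsmul_eq_mul]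
    ring

end MagicRectangle

section Join

variable {α β : Type*} {G : SimpleGraph α} {H : SimpleGraph β}

lemma joinG_eq_sum_sup : joinG G H = (G ⊕g H) ⊔ completeBipartiteGraph α β := by
  ext (a | b) (a' | b')
  · simpa [joinG, G.adj_comm a' a] using fun h : G.Adj a a' => h.ne
  · simp [joinG]
  · simp [joinG]
  · simpa [joinG, H.adj_comm b' b] using fun h : H.Adj b b' => h.ne

@[simp]
lemma joinG_adj_inl_inl {a a' : α} : (joinG G H).Adj (.inl a) (.inl a') ↔ G.Adj a a' := by
  simp [joinG_eq_sum_sup]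

@[simp]
lemma joinG_adj_inr_inr {b b' : β} : (joinG G H).Adj (.inr b) (.inr b') ↔ H.Adj b b' := by
  simp [joinG_eq_sum_sup]

@[simp]
lemma joinG_adj_inl_inr {a : α} {b : β} : (joinG G H).Adj (.inl a) (.inr b) := by
  simp [joinG_eq_sum_sup]

lemma ncard_edgeSet_joinG [Finite α] [Finite β] : (joinG G H).edgeSet.ncard =
    G.edgeSet.ncard + Nat.card α * Nat.card β + H.edgeSet.ncard := by
  have hdisj : Disjoint (G ⊕g H) (completeBipartiteGraph α β) := by
    rw [SimpleGraph.disjoint_left]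
    rintro (a | b) (a' | b') <;> simp
  have hsum : (G ⊕g H).edgeSet.ncard = G.edgeSet.ncard + H.edgeSet.ncard := by
    simp only [← Nat.card_coe_set_eq, Nat.card_congr edgeSetSumEquiv, Nat.card_sum]
  have hbip : (completeBipartiteGraph α β).edgeSet.ncard = Nat.card α * Nat.card β := by
    rw [Set.ncard, encard_edgeSet_completeBipartiteGraph, ENat.toNat_mul]
    rfl
  rw [joinG_eq_sum_sup, edgeSet_sup, Set.ncard_union_eq (disjoint_edgeSet.mpr hdisj), hsum, hbip]
  ring

variable [Fintype α] [Fintype β]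

lemma neighborFinset_joinG_inl (a : α) :
    (joinG G H).neighborFinset (.inl a) = (G.neighborFinset a).disjSum univ := by
  ext (a' | b) <;> simp

lemma neighborFinset_joinG_inr (b : β) :
    (joinG G H).neighborFinset (.inr b) = univ.disjSum (H.neighborFinset b) := by
  ext (a | b') <;> simp [adj_comm _ (Sum.inr b) (Sum.inl _)]

end Join

section Weight

lemma chiLA_le_colorCount {V : Type*} [Fintype V] {G : SimpleGraph V} {f : Sym2 V → ℕ}
    (hf : IsLocalAntimagic G f) : chiLA G ≤ colorCount G f :=
  Nat.sInf_le ⟨f, hf, rfl⟩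

lemma vertexWeight_eq_sum_neighborFinset {V : Type*} [Fintype V] (G : SimpleGraph V)
    (f : Sym2 V → ℕ) (x : V) [Fintype (G.neighborSet x)] :
    vertexWeight G f x = ∑ y ∈ G.neighborFinset x, f s(x, y) := by
  refine (sum_bij (fun y _ => s(x, y)) (fun y hy => ?_) (fun y _ z _ => Sym2.congr_right.mp)
    (fun e he => ?_) fun _ _ => rfl).symm
  · simpa using hy
  · obtain ⟨hadj, y, rfl⟩ := mem_filter.mp he
    exact ⟨y, by simpa using hadj, rfl⟩

variable {α β : Type*}

/-- The labelling of a join with labels `f` and `c` on the edges of the two graphs and `W` on the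
edges between them. -/
def joinLabel (f : Sym2 α → ℕ) (W : α → β → ℕ) (c : Sym2 β → ℕ) : Sym2 (α ⊕ β) → ℕ :=
  Sym2.lift ⟨fun
    | .inl a, .inl a' => f s(a, a')
    | .inl a, .inr b => W a b
    | .inr b, .inl a => W a b
    | .inr b, .inr b' => c s(b, b'), by
    rintro (a | b) (a' | b') <;> simp only [Sym2.eq_swap]⟩

variable {f : Sym2 α → ℕ} {W : α → β → ℕ} {c : Sym2 β → ℕ}
  {G : SimpleGraph α} {H : SimpleGraph β} [Fintype α] [Fintype β]

lemma vertexWeight_joinLabel_inl (a : α) :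
    vertexWeight (joinG G H) (joinLabel f W c) (.inl a) = vertexWeight G f a + ∑ b, W a b := by
  rw [vertexWeight_eq_sum_neighborFinset, vertexWeight_eq_sum_neighborFinset,
    neighborFinset_joinG_inl, sum_disjSum]
  rfl

lemma vertexWeight_joinLabel_inr (b : β) :
    vertexWeight (joinG G H) (joinLabel f W c) (.inr b) = ∑ a, W a b + vertexWeight H c b := by
  rw [vertexWeight_eq_sum_neighborFinset, vertexWeight_eq_sum_neighborFinset,
    neighborFinset_joinG_inr, sum_disjSum]
  rfl

lemma bijOn_Icc_ncard_of_surjOn {γ : Type*} {s : Set γ} (hs : s.Finite) {g : γ → ℕ}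
    (hg : Set.SurjOn g s (Set.Icc 1 s.ncard)) : Set.BijOn g s (Set.Icc 1 s.ncard) := by
  have hcard : (Set.Icc 1 s.ncard).ncard = s.ncard := by
    rw [← coe_Icc, Set.ncard_coe_finset, Nat.card_Icc, Nat.add_sub_cancel]
  have himage : Set.Icc 1 s.ncard = g '' s :=
    Set.eq_of_subset_of_ncard_le hg (by rw [hcard]; exact Set.ncard_image_le hs) (hs.image g)
  have hinj : Set.InjOn g s := Set.injOn_of_ncard_image_eq (by rw [← himage, hcard]) hs
  exact himage ▸ hinj.bijOn_image

lemma isLocalAntimagic_joinLabel (hf : IsLocalAntimagic G f) {ρ : ℕ} (hρ : ∀ a, ∑ b, W a b = ρ)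
    (hlabel : ∀ v, G.edgeSet.ncard < v →
      v ≤ G.edgeSet.ncard + Fintype.card α * Fintype.card β + H.edgeSet.ncard →
        (∃ a b, W a b = v) ∨ v ∈ c '' H.edgeSet)
    (hH : ∀ ⦃b b'⦄, H.Adj b b' →
      ∑ a, W a b + vertexWeight H c b ≠ ∑ a, W a b' + vertexWeight H c b')
    (hne : ∀ a b, vertexWeight G f a + ρ ≠ ∑ a, W a b + vertexWeight H c b) :
    IsLocalAntimagic (joinG G H) (joinLabel f W c) := by
  refine ⟨bijOn_Icc_ncard_of_surjOn (Set.toFinite _) fun v hv => ?_, ?_⟩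
  · rw [ncard_edgeSet_joinG, Nat.card_eq_fintype_card, Nat.card_eq_fintype_card] at hv
    obtain hle | hlt := le_or_gt v G.edgeSet.ncard
    · obtain ⟨⟨a, a'⟩, he, rfl⟩ := hf.1.surjOn ⟨hv.1, hle⟩
      exact ⟨s(.inl a, .inl a'), joinG_adj_inl_inl.mpr he, rfl⟩
    · obtain ⟨a, b, rfl⟩ | ⟨⟨b, b'⟩, he, rfl⟩ := hlabel v hlt hv.2
      · exact ⟨s(.inl a, .inr b), joinG_adj_inl_inr, rfl⟩
      · exact ⟨s(.inr b, .inr b'), joinG_adj_inr_inr.mpr he, rfl⟩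
  · rintro (a | b) (a' | b') hadj <;>
      simp only [vertexWeight_joinLabel_inl, vertexWeight_joinLabel_inr, hρ]
    · exact fun h => hf.2 (joinG_adj_inl_inl.mp hadj) (Nat.add_right_cancel h)
    · exact hne a b'
    · exact (hne a' b).symm
    · exact hH (joinG_adj_inr_inr.mp hadj)

lemma colorCount_joinLabel_le {ρ : ℕ} (hρ : ∀ a, ∑ b, W a b = ρ) {T : Finset ℕ}
    (hT : ∀ b, ∑ a, W a b + vertexWeight H c b ∈ T) :
    colorCount (joinG G H) (joinLabel f W c) ≤ colorCount G f + #T := by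
  have hsub : univ.image (vertexWeight (joinG G H) (joinLabel f W c)) ⊆
      (univ.image (vertexWeight G f)).image (· + ρ) ∪ T := by
    rw [image_subset_iff]
    rintro (a | b) -
    · rw [vertexWeight_joinLabel_inl, hρ]
      exact mem_union_left _ (mem_image_of_mem _ (mem_image_of_mem _ (mem_univ a)))
    · rw [vertexWeight_joinLabel_inr]
      exact mem_union_right _ (hT b)
  exact (card_le_card hsub).trans ((card_union_le _ _).trans
    (Nat.add_le_add_right card_image_le _))

lemma chromaticNumber_add_le_colorCount {g : Sym2 (α ⊕ β) → ℕ}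
    (hg : IsLocalAntimagic (joinG G H) g) :
    G.chromaticNumber + H.chromaticNumber ≤ colorCount (joinG G H) g := by
  let w := vertexWeight (joinG G H) g
  have hG : G.chromaticNumber ≤ #(univ.image fun a => w (.inl a)) := by
    let C : G.Coloring (univ.image fun a => w (.inl a)) :=
      Coloring.mk (fun a => ⟨w (.inl a), mem_image_of_mem _ (mem_univ a)⟩) fun hadj h =>
        hg.2 (joinG_adj_inl_inl.mpr hadj) (congrArg Subtype.val h)
    simpa using C.colorable.chromaticNumber_le
  have hH : H.chromaticNumber ≤ #(univ.image fun b => w (.inr b)) := by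
    let C : H.Coloring (univ.image fun b => w (.inr b)) :=
      Coloring.mk (fun b => ⟨w (.inr b), mem_image_of_mem _ (mem_univ b)⟩) fun hadj h =>
        hg.2 (joinG_adj_inr_inr.mpr hadj) (congrArg Subtype.val h)
    simpa using C.colorable.chromaticNumber_le
  have hdisj : Disjoint (univ.image fun a => w (.inl a)) (univ.image fun b => w (.inr b)) := by
    simp only [Finset.disjoint_left, mem_image, mem_univ, true_and]
    rintro _ ⟨a, rfl⟩ ⟨b, h⟩
    exact hg.2 joinG_adj_inl_inr h.symm
  have hunion : colorCount (joinG G H) g =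
      #(univ.image fun a => w (.inl a)) + #(univ.image fun b => w (.inr b)) := by
    rw [← card_union_of_disjoint hdisj, colorCount]
    congr 1
    ext v
    simp [w]
  rw [hunion, Nat.cast_add]
  exact add_le_add hG hH

lemma chromaticNumber_add_le_chiLA {g : Sym2 (α ⊕ β) → ℕ}
    (hg : IsLocalAntimagic (joinG G H) g) :
    G.chromaticNumber + H.chromaticNumber ≤ chiLA (joinG G H) := by
  obtain ⟨g', hg', hmin⟩ : chiLA (joinG G H) ∈
      {n | ∃ g, IsLocalAntimagic (joinG G H) g ∧ colorCount (joinG G H) g = n} :=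
    Nat.sInf_mem ⟨_, g, hg, rfl⟩
  exact hmin ▸ chromaticNumber_add_le_colorCount hg'

end Weight

section Cycle

variable {n : ℕ}

lemma sub_one_ne_add_one (j : Fin (n + 3)) : j - 1 ≠ j + 1 := by
  rw [Ne, sub_eq_iff_eq_add, add_assoc, left_eq_add]
  simp [Fin.ext_iff, Fin.val_add, Nat.mod_eq_of_lt]

lemma injective_cycleEdge : Function.Injective fun j : Fin (n + 3) => s(j - 1, j) := by
  intro i j h
  obtain h | ⟨rfl, h⟩ := Sym2.eq_iff.mp h
  · exact h.2
  · exact absurd (eq_sub_iff_add_eq.mp h).symm (sub_one_ne_add_one i)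

lemma edgeSet_cycleGraph :
    (cycleGraph (n + 3)).edgeSet = Set.range fun j : Fin (n + 3) => s(j - 1, j) := by
  ext e
  induction e with
  | _ i j =>
    rw [mem_edgeSet, cycleGraph_adj]
    constructor
    · rintro (h | h)
      · exact ⟨i, by simp [← h, Sym2.eq_swap]⟩
      · exact ⟨j, by simp [← h]⟩
    · rintro ⟨k, hk⟩
      obtain ⟨rfl, rfl⟩ | ⟨rfl, rfl⟩ := Sym2.eq_iff.mp hk <;> simp

lemma ncard_edgeSet_cycleGraph : (cycleGraph (n + 3)).edgeSet.ncard = n + 3 := by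
  rw [edgeSet_cycleGraph, Set.ncard_range_of_injective injective_cycleEdge, Nat.card_fin]

/-- The edge labelling of a cycle giving the label `C j` to the edge that joins `j - 1` to `j`. -/
noncomputable def cycleLabel (C : Fin (n + 3) → ℕ) : Sym2 (Fin (n + 3)) → ℕ :=
  Function.extend (fun j => s(j - 1, j)) C 0

lemma cycleLabel_apply (C : Fin (n + 3) → ℕ) (j : Fin (n + 3)) :
    cycleLabel C s(j - 1, j) = C j :=
  injective_cycleEdge.extend_apply C 0 j

lemma vertexWeight_cycleLabel (C : Fin (n + 3) → ℕ) (j : Fin (n + 3)) :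
    vertexWeight (cycleGraph (n + 3)) (cycleLabel C) j = C j + C (j + 1) := by
  have hsucc : cycleLabel C s(j, j + 1) = C (j + 1) := by
    simpa using cycleLabel_apply C (j + 1)
  rw [vertexWeight_eq_sum_neighborFinset, cycleGraph_neighborFinset,
    sum_pair (sub_one_ne_add_one j), Sym2.eq_swap, cycleLabel_apply, hsucc]

variable {α : Type*} [Fintype α] {G : SimpleGraph α} {f : Sym2 α → ℕ}

lemma exists_isLocalAntimagic_joinG_cycleGraph (hf : IsLocalAntimagic G f)
    {W : α → Fin (n + 3) → ℕ} {C : Fin (n + 3) → ℕ} {ρ : ℕ} {w : Fin 3 → ℕ}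
    (hw : Function.Injective w) (hρ : ∀ a, ∑ b, W a b = ρ)
    (hcycle : ∀ j, ∑ a, W a j + (C j + C (j + 1)) = w (cycleGraph.tricoloring (n + 3) (by lia) j))
    (hlabel : ∀ v, G.edgeSet.ncard < v →
      v ≤ G.edgeSet.ncard + Fintype.card α * (n + 3) + (n + 3) →
        (∃ a b, W a b = v) ∨ ∃ j, C j = v)
    (hne : ∀ a i, vertexWeight G f a + ρ ≠ w i) :
    ∃ g, IsLocalAntimagic (joinG G (cycleGraph (n + 3))) g ∧
      colorCount (joinG G (cycleGraph (n + 3))) g ≤ colorCount G f + 3 := by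
  have hweight (j) : ∑ a, W a j + vertexWeight (cycleGraph (n + 3)) (cycleLabel C) j =
      w (cycleGraph.tricoloring (n + 3) (by lia) j) := by
    rw [vertexWeight_cycleLabel, hcycle]
  refine ⟨joinLabel f W (cycleLabel C), isLocalAntimagic_joinLabel hf hρ ?_ ?_ ?_, ?_⟩
  · intro v hlt hle
    rw [Fintype.card_fin, ncard_edgeSet_cycleGraph] at hle
    refine (hlabel v hlt hle).imp_right ?_
    rintro ⟨j, rfl⟩
    exact ⟨s(j - 1, j), edgeSet_cycleGraph ▸ ⟨j, rfl⟩, cycleLabel_apply C j⟩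
  · intro i j hadj
    rw [hweight, hweight]
    exact hw.ne (Coloring.valid _ hadj)
  · intro a j
    rw [hweight]
    exact hne a _
  · have hT := colorCount_joinLabel_le (G := G) (f := f) (H := cycleGraph (n + 3)) hρ
      (T := univ.image w) fun j => hweight j ▸ mem_image_of_mem w (mem_univ _)
    rwa [card_image_of_injective _ hw, card_univ, Fintype.card_fin] at hT

end Cycle

section OddCycle

variable {κ : ℕ}

lemma tricoloring_apply (j : Fin (2 * κ + 3)) :
    cycleGraph.tricoloring (2 * κ + 3) (by lia) j =
      if (j : ℕ) = 2 * κ + 2 then 2 else if Even (j : ℕ) then 0 else 1 := by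
  have hmod : (⟨j % 2, by lia⟩ : Fin 3) = if Even (j : ℕ) then 0 else 1 := by
    split_ifs <;> ext <;> simp <;> grind
  rw [← hmod]
  rfl

/-- The labels `κ + 2, κ + 1, κ + 3, κ, …, 1, 2 * κ + 3` for the consecutive edges of a cycle of
length `2 * κ + 3`: the two edges at a vertex have label sum `2 * κ + 3` or `2 * κ + 4`
alternately, except where the cycle closes up. -/
def zigzag (κ : ℕ) (j : Fin (2 * κ + 3)) : ℕ :=
  if Even (j : ℕ) then κ + 2 + j / 2 else κ + 1 - j / 2

lemma zigzag_add_zigzag (j : Fin (2 * κ + 3)) :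
    zigzag κ j + zigzag κ (j + 1) =
      ![2 * κ + 3, 2 * κ + 4, 3 * κ + 5] (cycleGraph.tricoloring (2 * κ + 3) (by lia) j) := by
  have hval := Fin.val_add_one (n := 2 * κ + 2) j
  simp only [Fin.ext_iff, Fin.val_last] at hval
  rw [tricoloring_apply]
  split_ifs <;> simp only [Matrix.cons_val] <;> grind [zigzag]

lemma exists_zigzag_eq {v : ℕ} (hv : 1 ≤ v) (hvκ : v ≤ 2 * κ + 3) : ∃ j, zigzag κ j = v := by
  obtain h | h := le_or_gt v (κ + 1)
  · refine ⟨⟨2 * (κ + 1 - v) + 1, by lia⟩, ?_⟩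
    grind [zigzag]
  · refine ⟨⟨2 * (v - (κ + 2)), by lia⟩, ?_⟩
    grind [zigzag]

variable {α : Type*} [Fintype α] {G : SimpleGraph α} {f : Sym2 α → ℕ}

lemma exists_isLocalAntimagic_joinG_of_one_lt_card {e p : ℕ} (he : G.edgeSet.ncard = e)
    (hp : Fintype.card α = p) (hpodd : Odd p) (hp1 : 1 < p) (hf : IsLocalAntimagic G f)
    (hne : ∀ a i, 2 * vertexWeight G f a + (2 * κ + 3) * (2 * e + p * (2 * κ + 3) + 1) ≠
      p * (2 * e + p * (2 * κ + 3) + 1) + 4 * (e + p * (2 * κ + 3)) +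
        2 * ![2 * κ + 3, 2 * κ + 4, 3 * κ + 5] i) :
    ∃ g, IsLocalAntimagic (joinG G (cycleGraph (2 * κ + 3))) g ∧
      colorCount (joinG G (cycleGraph (2 * κ + 3))) g ≤ colorCount G f + 3 := by
  obtain ⟨W, hlabel, hrow, hcol⟩ := exists_magic_labels (β := Fin (2 * κ + 3)) (hp ▸ hpodd)
    (by simp [parity_simps]) (hp ▸ hp1) (by simp) e
  simp only [Fintype.card_fin, hp] at hlabel hrow hcol
  refine exists_isLocalAntimagic_joinG_cycleGraph hf (W := W)
    (C := fun j => e + p * (2 * κ + 3) + zigzag κ j)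
    (ρ := (2 * κ + 3) * (2 * e + p * (2 * κ + 3) + 1) / 2)
    (w := fun i => p * (2 * e + p * (2 * κ + 3) + 1) / 2 + 2 * (e + p * (2 * κ + 3)) +
      ![2 * κ + 3, 2 * κ + 4, 3 * κ + 5] i) ?_ ?_ ?_ ?_ ?_
  · refine (add_right_injective _).comp fun i i' h => ?_
    fin_cases i <;> fin_cases i' <;> simp at h ⊢ <;> lia
  · intro a
    have hrow_a := hrow a
    lia
  · intro j
    have hcol_j := hcol j
    have hzigzag := zigzag_add_zigzag j
    lia
  · intro v hv hle
    rw [he] at hv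
    rw [he, hp] at hle
    obtain h | h := le_or_gt v (e + p * (2 * κ + 3))
    · exact .inl (hlabel v hv h)
    · obtain ⟨j, hj⟩ := exists_zigzag_eq (κ := κ) (v := v - (e + p * (2 * κ + 3)))
        (by lia) (by lia)
      exact .inr ⟨j, by lia⟩
  · intro a i h
    have hrow_a := hrow a
    have hcol_0 := hcol 0
    exact hne a i (by omega)

end OddCycle

section Wheel

variable {κ : ℕ}

/-- The label of the edge joining `j - 1` to `j` in the local antimagic labelling of the wheel
over a cycle of length `2 * κ + 3`. -/
def wheelRim (κ : ℕ) (j : Fin (2 * κ + 3)) : ℕ :=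
  if Even (j : ℕ) then κ + 2 - j / 2 else 2 * κ + 3 - j / 2

/-- The label of the edge joining the hub to `j` in the local antimagic labelling of the wheel
over a cycle of length `2 * κ + 3`. -/
def wheelSpoke (κ : ℕ) (j : Fin (2 * κ + 3)) : ℕ :=
  if (j : ℕ) = 2 * κ + 2 then 4 * κ + 6
  else if Even (j : ℕ) then 2 * κ + 5 + j else 2 * κ + 3 + j

lemma wheelSpoke_add_wheelRim (j : Fin (2 * κ + 3)) :
    wheelSpoke κ j + (wheelRim κ j + wheelRim κ (j + 1)) =
      ![5 * κ + 10, 5 * κ + 8, 5 * κ + 9]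
        (cycleGraph.tricoloring (2 * κ + 3) (by lia) j) := by
  have hval := Fin.val_add_one (n := 2 * κ + 2) j
  simp only [Fin.ext_iff, Fin.val_last] at hval
  rw [tricoloring_apply]
  split_ifs <;> simp only [Matrix.cons_val] <;> grind [wheelRim, wheelSpoke]

lemma exists_wheelRim_eq {v : ℕ} (hv : 1 ≤ v) (hvκ : v ≤ 2 * κ + 3) :
    ∃ j, wheelRim κ j = v := by
  obtain h | h := le_or_gt v (κ + 2)
  · refine ⟨⟨2 * (κ + 2 - v), by lia⟩, ?_⟩
    grind [wheelRim]
  · refine ⟨⟨2 * (2 * κ + 3 - v) + 1, by lia⟩, ?_⟩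
    grind [wheelRim]

lemma exists_wheelSpoke_eq {v : ℕ} (hv : 2 * κ + 4 ≤ v) (hvκ : v ≤ 4 * κ + 6) :
    ∃ j, wheelSpoke κ j = v := by
  obtain rfl | hlt := hvκ.eq_or_lt
  · exact ⟨⟨2 * κ + 2, by lia⟩, by simp [wheelSpoke]⟩
  obtain h | h := Nat.even_or_odd v
  · refine ⟨⟨v - (2 * κ + 3), by lia⟩, ?_⟩
    grind [wheelSpoke]
  · refine ⟨⟨v - (2 * κ + 5), by grind⟩, ?_⟩
    grind [wheelSpoke]

lemma lt_sum_wheelSpoke : 5 * κ + 10 < ∑ j, wheelSpoke κ j := calc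
  5 * κ + 10 < (2 * κ + 3) * (2 * κ + 4) := by nlinarith
  _ = ∑ _j : Fin (2 * κ + 3), (2 * κ + 4) := by simp
  _ ≤ ∑ j, wheelSpoke κ j := sum_le_sum fun j _ => by grind [wheelSpoke]

lemma exists_isLocalAntimagic_joinG_of_unique {α : Type*} [Fintype α] [Unique α]
    {G : SimpleGraph α} {f : Sym2 α → ℕ} (hf : IsLocalAntimagic G f) :
    ∃ g, IsLocalAntimagic (joinG G (cycleGraph (2 * κ + 3))) g ∧
      colorCount (joinG G (cycleGraph (2 * κ + 3))) g ≤ colorCount G f + 3 := by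
  obtain rfl : G = ⊥ := Subsingleton.elim _ _
  refine exists_isLocalAntimagic_joinG_cycleGraph hf (W := fun _ => wheelSpoke κ)
    (w := ![5 * κ + 10, 5 * κ + 8, 5 * κ + 9]) (C := wheelRim κ) ?_ (fun _ => rfl) ?_ ?_ ?_
  · intro i i' h
    fin_cases i <;> fin_cases i' <;> simp at h ⊢
  · intro j
    simpa using wheelSpoke_add_wheelRim j
  · intro v hv hle
    simp only [edgeSet_bot, Set.ncard_empty, Fintype.card_unique] at hv hle
    obtain h | h := le_or_gt v (2 * κ + 3)
    · exact .inr (exists_wheelRim_eq hv h)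
    · exact .inl ⟨default, exists_wheelSpoke_eq h (by lia)⟩
  · intro a i
    have := lt_sum_wheelSpoke (κ := κ)
    fin_cases i <;> simp <;> lia

end Wheel

/-- Theorem: Let `G` be a graph of odd order `p` and size `e` with `χ(G) = χ_la(G) = t`,
witnessed by a local antimagic labeling `f` with `c(f) = t = χ(G)`. Let `m ≥ 3` be odd. If for
every vertex `u`, `f⁺(u)` avoids the three stated values, then `χ_la(G ∨ C_m) = χ_la(G) + 3`.
(The avoided-value conditions are stated multiplied by 2 over `ℤ`, which is equivalent since
the parity hypotheses make the relevant quantities even.) -/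
theorem chiLA_join_cycle {V : Type*} [Fintype V] (G : SimpleGraph V) (p e m t : ℕ)
    (hp : Fintype.card V = p) (hpodd : Odd p)
    (he : G.edgeSet.ncard = e)
    (hchi : G.chromaticNumber = (t : ℕ∞)) (hla : chiLA G = t)
    (f : Sym2 V → ℕ) (hf : IsLocalAntimagic G f) (hcf : colorCount G f = t)
    (hm : 3 ≤ m) (hmodd : Odd m)
    (hne : ∀ u : V,
      2 * (vertexWeight G f u : ℤ) ≠
        ((p : ℤ) - m) * (2 * (e : ℤ) + (p : ℤ) * m + 1) + 4 * ((e : ℤ) + (p : ℤ) * m) + 2 * m ∧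
      2 * (vertexWeight G f u : ℤ) ≠
        ((p : ℤ) - m) * (2 * (e : ℤ) + (p : ℤ) * m + 1) + 4 * ((e : ℤ) + (p : ℤ) * m) + 2 * m + 2 ∧
      2 * (vertexWeight G f u : ℤ) ≠
        ((p : ℤ) - m) * (2 * (e : ℤ) + (p : ℤ) * m + 1) + 4 * ((e : ℤ) + (p : ℤ) * m)
          + (3 * (m : ℤ) + 1)) :
    chiLA (joinG G (cycleGraph m)) = chiLA G + 3 := by
  obtain ⟨κ, rfl⟩ : ∃ κ, m = 2 * κ + 3 := by
    obtain ⟨k, rfl⟩ := hmodd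
    exact ⟨k - 1, by lia⟩
  obtain ⟨g, hg, hcount⟩ : ∃ g, IsLocalAntimagic (joinG G (cycleGraph (2 * κ + 3))) g ∧
      colorCount (joinG G (cycleGraph (2 * κ + 3))) g ≤ colorCount G f + 3 := by
    obtain rfl | hp1 := eq_or_ne p 1
    · obtain ⟨_⟩ := Fintype.card_eq_one_iff_nonempty_unique.mp hp
      exact exists_isLocalAntimagic_joinG_of_unique hf
    · refine exists_isLocalAntimagic_joinG_of_one_lt_card he hp hpodd (by grind) hf ?_
      intro u i
      obtain ⟨h₀, h₁, h₂⟩ := hne u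
      zify at h₀ h₁ h₂ ⊢
      fin_cases i <;>
        simp only [Fin.zero_eta, Fin.mk_one, Fin.reduceFinMk, Matrix.cons_val] <;> grind
  refine le_antisymm ((chiLA_le_colorCount hg).trans (by lia)) ?_
  have hlower := chromaticNumber_add_le_chiLA hg
  rw [hchi, chromaticNumber_cycleGraph_of_odd _ (by lia) hmodd] at hlower
  rw [hla]
  exact_mod_cast hlower
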